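/- Let u_h ∈ V_h solve the CIP-FEM scheme. Then: (i) ‖∇u_h‖²_{L²(Ω)} − k²·‖u_h‖²_{L²(Ω)} ≤ 2·‖f‖_{L²(Ω)}·‖u_h‖_{L²(Ω)} + (1/k)·‖g‖²_{L²(Γ)}, and (ii) Σ_{e∈ℰ_h^I} γ_e·(h_e/p²)·‖[∂u_h/∂n_e]‖²_{L²(e)} + k·‖u_h‖²_{L²(Γ)} ≤ 2·‖f‖_{L²(Ω)}·‖u_h‖_{L²(Ω)} + (1/k)·‖g‖²_{L²(Γ)}. -/

import Mathlib

noncomputable section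

open scoped BigOperators ComplexConjugate

/-- The complex `L²`-pairing written with the convention of the paper:
`pip x y` is linear in `x` and conjugate-linear in `y`. -/
def pip {H : Type} [NormedAddCommGroup H] [InnerProductSpace ℂ H] (x y : H) : ℂ :=
  @inner ℂ _ _ y x

/-- `x ≃ y`: the two quantities are comparable with constants `c₁, c₂`. -/
def Comparable (c₁ c₂ x y : ℝ) : Prop := c₁ * y ≤ x ∧ x ≤ c₂ * y

/-- Abstract functional-analytic skeleton associated with the bounded, strictly
star-shaped domain `Ω ⊂ ℝ^d` (`d = 2, 3`) with analytic boundary `Γ`: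
the energy space `V`, realizations of the `L²(Ω)`, `H¹(Ω)`-gradient and `L²(Γ)`-trace
pairings through linear maps into Hilbert spaces, the scale of Sobolev norms
`‖·‖_{H^s(Ω)}`, the norms `‖∇ⁿ·‖_{L²(Ω)}` of the total derivatives, and the
`H^{1/2}(Γ)` norm of boundary data. -/
structure SpaceSkeleton where
  /-- the space dimension -/
  d : ℕ
  hd : d = 2 ∨ d = 3
  /-- the energy space `V ⊃ H¹(Ω) ∩ ∏_K H²(K)` -/
  V : Type
  [instAddCommGroup : AddCommGroup V]
  [instModule : Module ℂ V]
  /-- Hilbert space realizing `L²(Ω)` -/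
  H0 : Type
  [instH0 : NormedAddCommGroup H0]
  [instH0i : InnerProductSpace ℂ H0]
  /-- Hilbert space receiving gradients -/
  HG : Type
  [instHG : NormedAddCommGroup HG]
  [instHGi : InnerProductSpace ℂ HG]
  /-- Hilbert space realizing `L²(Γ)` -/
  HB : Type
  [instHB : NormedAddCommGroup HB]
  [instHBi : InnerProductSpace ℂ HB]
  /-- the embedding `V → L²(Ω)`; `‖ι v‖ = ‖v‖_{L²(Ω)}` and `pip (ι u) (ι v) = (u,v)_Ω` -/
  ι : V →ₗ[ℂ] H0
  /-- the (broken) gradient; `‖grad v‖ = ‖∇v‖_{L²(Ω)}` and `pip (grad u) (grad v) = (∇u,∇v)_Ω` -/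
  grad : V →ₗ[ℂ] HG
  /-- the boundary trace; `‖tr v‖ = ‖v‖_{L²(Γ)}` and `pip (tr u) (tr v) = ⟨u,v⟩_Γ` -/
  tr : V →ₗ[ℂ] HB
  /-- `sob s v = ‖v‖_{H^s(Ω)}` -/
  sob : ℝ → V → ℝ
  /-- `memHs s v` means `v ∈ H^s(Ω)` -/
  memHs : ℝ → V → Prop
  /-- `gradN n v = ‖∇ⁿ v‖_{L²(Ω)}`, where `|∇ⁿu(x)|² = ∑_{|α|=n} (n!/α!)|D^α u(x)|²` -/
  gradN : ℕ → V → ℝ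
  /-- `h12 g = ‖g‖_{H^{1/2}(Γ)}` -/
  h12 : HB → ℝ

attribute [instance] SpaceSkeleton.instAddCommGroup SpaceSkeleton.instModule
  SpaceSkeleton.instH0 SpaceSkeleton.instH0i SpaceSkeleton.instHG SpaceSkeleton.instHGi
  SpaceSkeleton.instHB SpaceSkeleton.instHBi

namespace SpaceSkeleton

variable (S : SpaceSkeleton)

/-- `u` is a (variational) solution of the Helmholtz problem
`-Δu - k²u = f` in `Ω`, `∂u/∂n + iku = g` on `Γ`:
`(∇u,∇v)_Ω - k²(u,v)_Ω + ik⟨u,v⟩_Γ = (f,v)_Ω + ⟨g,v⟩_Γ` for all `v ∈ V`. -/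
def IsHelmholtzSolution (k : ℝ) (f : S.H0) (g : S.HB) (u : S.V) : Prop :=
  ∀ v : S.V,
    pip (S.grad u) (S.grad v) - (k : ℂ) ^ 2 * pip (S.ι u) (S.ι v)
        + Complex.I * (k : ℂ) * pip (S.tr u) (S.tr v)
      = pip f (S.ι v) + pip g (S.tr v)

/-- `C_{f,g} = ‖f‖_{L²(Ω)} + ‖g‖_{H^{1/2}(Γ)}`. -/
def Cfg (f : S.H0) (g : S.HB) : ℝ := ‖f‖ + S.h12 g

end SpaceSkeleton

/-- Abstract data of the curvilinear simplicial triangulation `𝒯_h` of `Ω`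
(no hanging nodes, element maps satisfying Assumption 5.1 of Melenk–Sauter (2011)),
of the conforming `hp`-finite element space `V_h`, and of the parameters
`k, h, p` and penalty parameters `γ_e ≃ γ`:  `E` is the set of interior
edges/faces `ℰ_h^I`, and `jump e` realizes the jump `[∂·/∂n_e]` of the normal
derivative across `e`, so that `‖jump e v‖ = ‖[∂v/∂n_e]‖_{L²(e)}`. -/
structure MeshData (S : SpaceSkeleton) where
  /-- polynomial degree -/
  p : ℕ
  hp : 1 ≤ p
  /-- wave number -/
  k : ℝ
  /-- mesh size `h = max_K diam K` -/
  h : ℝ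
  /-- penalty parameter -/
  γ : ℝ
  /-- the set of interior edges/faces `ℰ_h^I` -/
  E : Type
  [instE : Fintype E]
  /-- Hilbert space realizing the `L²(e)` spaces -/
  HE : Type
  [instHE : NormedAddCommGroup HE]
  [instHEi : InnerProductSpace ℂ HE]
  /-- `jump e v = [∂v/∂n_e]` -/
  jump : E → S.V →ₗ[ℂ] HE
  /-- `h_e = diam e` -/
  he : E → ℝ
  /-- the penalty parameters `γ_e` -/
  γe : E → ℝ
  /-- the conforming finite element space `V_h ⊂ V` -/
  Vh : Submodule ℂ S.V

attribute [instance] MeshData.instE MeshData.instHE MeshData.instHEi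

namespace MeshData

variable {S : SpaceSkeleton} (M : MeshData S)

/-- the penalty jump form `J(u,v) = ∑_e iγ_e (h_e/p²) ⟨[∂u/∂n_e],[∂v/∂n_e]⟩_e`. -/
def Jf (u v : S.V) : ℂ :=
  ∑ e : M.E, Complex.I * (M.γe e : ℂ) * ((M.he e / (M.p : ℝ) ^ 2 : ℝ) : ℂ)
      * pip (M.jump e u) (M.jump e v)

/-- `a_h(u,v) = a_h^+(u,v) = (∇u,∇v)_Ω + J(u,v)`. -/
def ah (u v : S.V) : ℂ := pip (S.grad u) (S.grad v) + M.Jf u v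

/-- `a_h^-(u,v) = (∇u,∇v)_Ω - J(u,v)`. -/
def ahm (u v : S.V) : ℂ := pip (S.grad u) (S.grad v) - M.Jf u v

/-- `‖v‖_{1,h}² = ‖∇v‖²_{L²(Ω)} + ∑_e γ_e (h_e/p²) ‖[∂v/∂n_e]‖²_{L²(e)}`. -/
def norm1h (v : S.V) : ℝ :=
  Real.sqrt (‖S.grad v‖ ^ 2
    + ∑ e : M.E, M.γe e * (M.he e / (M.p : ℝ) ^ 2) * ‖M.jump e v‖ ^ 2)

/-- `|||v|||² = ‖v‖²_{1,h} + k ‖v‖²_{L²(Γ)}`. -/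
def tnorm (v : S.V) : ℝ := Real.sqrt (M.norm1h v ^ 2 + M.k * ‖S.tr v‖ ^ 2)

/-- `C_err = (1 + γ + kh/p)^{1/2}`. -/
def Cerr : ℝ := Real.sqrt (1 + M.γ + M.k * M.h / (M.p : ℝ))

/-- `C_p = p^{(d-3)/2}` (simplicial triangulations, `d = 2, 3`). -/
def Cp : ℝ := (M.p : ℝ) ^ (((S.d : ℝ) - 3) / 2)

/-- `C_sta = 1 + (1/k)(γp⁴/h² + p⁶C_p²/(γh²))`. -/
def Csta : ℝ :=
  1 + (1 / M.k) * (M.γ * (M.p : ℝ) ^ 4 / M.h ^ 2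
      + (M.p : ℝ) ^ 6 * M.Cp ^ 2 / (M.γ * M.h ^ 2))

/-- `u_h ∈ V_h` solves the CIP-FEM scheme
`a_h(u_h,v_h) - k²(u_h,v_h)_Ω + ik⟨u_h,v_h⟩_Γ = (f,v_h)_Ω + ⟨g,v_h⟩_Γ` for all `v_h ∈ V_h`. -/
def IsFEMSolution (f : S.H0) (g : S.HB) (uh : S.V) : Prop :=
  uh ∈ M.Vh ∧ ∀ v ∈ M.Vh,
    M.ah uh v - (M.k : ℂ) ^ 2 * pip (S.ι uh) (S.ι v)
        + Complex.I * (M.k : ℂ) * pip (S.tr uh) (S.tr v)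
      = pip f (S.ι v) + pip g (S.tr v)

/-- `u ∈ H²(Ω)` is the exact solution of the Helmholtz problem, viewed in the broken
setting: its interelement normal-derivative jumps vanish and it satisfies the
variational identity (2.6). -/
def IsExactSolution (f : S.H0) (g : S.HB) (u : S.V) : Prop :=
  (∀ e : M.E, M.jump e u = 0) ∧ S.IsHelmholtzSolution M.k f g u

/-- the elliptic projection `u_h^+ ∈ V_h` of `u`:
`a_h(u_h^+, v_h) + ik⟨u_h^+, v_h⟩_Γ = a_h(u, v_h) + ik⟨u, v_h⟩_Γ` for all `v_h ∈ V_h`. -/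
def IsProjPlus (u uhp : S.V) : Prop :=
  uhp ∈ M.Vh ∧ ∀ v ∈ M.Vh,
    M.ah uhp v + Complex.I * (M.k : ℂ) * pip (S.tr uhp) (S.tr v)
      = M.ah u v + Complex.I * (M.k : ℂ) * pip (S.tr u) (S.tr v)

/-- the elliptic projection `u_h^- ∈ V_h` of `u`:
`a_h(v_h, u_h^-) + ik⟨v_h, u_h^-⟩_Γ = a_h(v_h, u) + ik⟨v_h, u⟩_Γ` for all `v_h ∈ V_h`
(written, equivalently, after conjugation, through `a_h^-` and `-ik`). -/
def IsProjMinus (u uhm : S.V) : Prop :=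
  uhm ∈ M.Vh ∧ ∀ v ∈ M.Vh,
    M.ahm uhm v - Complex.I * (M.k : ℂ) * pip (S.tr uhm) (S.tr v)
      = M.ahm u v - Complex.I * (M.k : ℂ) * pip (S.tr u) (S.tr v)

/-- the standing assumptions of the paper: `k ≳ 1`, `h > 0`, `γ ≥ 0`, `γ_e ≥ 0`,
`h_e ≃ h` and `γ_e ≃ γ` (with comparability constants `c₁, c₂`). -/
def Admissible (c₁ c₂ : ℝ) : Prop :=
  1 ≤ M.k ∧ 0 < M.h ∧ 0 ≤ M.γ ∧ (∀ e : M.E, 0 ≤ M.γe e) ∧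
  (∀ e : M.E, Comparable c₁ c₂ (M.he e) M.h) ∧
  (∀ e : M.E, Comparable c₁ c₂ (M.γe e) M.γ)

/-- `inf_{z_h ∈ V_h} |||u - z_h|||`. -/
def bestApprox (u : S.V) : ℝ := ⨅ z : M.Vh, M.tnorm (u - (z : S.V))

end MeshData

/-!
Testing the scheme with `v_h = u_h` gives a complex identity whose real part is
`‖∇u_h‖² - k²‖u_h‖²` and whose imaginary part is the jump energy plus `k‖u_h‖²_Γ`. Both parts are
at most `‖f‖‖u_h‖ + ‖g‖‖u_h‖_Γ`. Young's inequality `2‖g‖‖u_h‖_Γ ≤ k‖u_h‖²_Γ + ‖g‖²/k` loses a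
full `k‖u_h‖²_Γ`, which is recovered from the imaginary part: by adding it to the real part in the
first bound, and by doubling it in the second.
-/

theorem pip_self {H : Type} [NormedAddCommGroup H] [InnerProductSpace ℂ H] (x : H) :
    pip x x = ((‖x‖ ^ 2 : ℝ) : ℂ) := by
  simp [pip, inner_self_eq_norm_sq_to_K]

theorem norm_pip_le {H : Type} [NormedAddCommGroup H] [InnerProductSpace ℂ H] (x y : H) :
    ‖pip x y‖ ≤ ‖x‖ * ‖y‖ :=
  (norm_inner_le_norm y x).trans_eq (mul_comm _ _)

theorem norm_pip_add_pip_le {H K : Type} [NormedAddCommGroup H] [InnerProductSpace ℂ H]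
    [NormedAddCommGroup K] [InnerProductSpace ℂ K] (f x : H) (g y : K) :
    ‖pip f x + pip g y‖ ≤ ‖f‖ * ‖x‖ + ‖g‖ * ‖y‖ :=
  norm_add_le_of_le (norm_pip_le f x) (norm_pip_le g y)

namespace MeshData

section JumpEnergy

variable {S : SpaceSkeleton} (M : MeshData S)

/-- The jump energy `∑_e γ_e (h_e/p²) ‖[∂v/∂n_e]‖²_{L²(e)}`, the real number `j` for which
`J(v,v) = ij`. -/
def jumpEnergy (v : S.V) : ℝ :=
  ∑ e : M.E, M.γe e * (M.he e / (M.p : ℝ) ^ 2) * ‖M.jump e v‖ ^ 2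

theorem jumpEnergy_nonneg (hγe : ∀ e : M.E, 0 ≤ M.γe e) (hhe : ∀ e : M.E, 0 ≤ M.he e)
    (v : S.V) : 0 ≤ M.jumpEnergy v :=
  Finset.sum_nonneg fun e _ =>
    mul_nonneg (mul_nonneg (hγe e) (div_nonneg (hhe e) (sq_nonneg _))) (sq_nonneg _)

theorem Jf_self (v : S.V) : M.Jf v v = Complex.I * (M.jumpEnergy v : ℂ) := by
  simp only [Jf, jumpEnergy, pip_self, Complex.ofReal_sum, Complex.ofReal_mul, Finset.mul_sum,
    mul_assoc]

end JumpEnergy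

namespace IsFEMSolution

variable {S : SpaceSkeleton} {M : MeshData S} {f : S.H0} {g : S.HB} {uh : S.V}

theorem energy_identity (huh : M.IsFEMSolution f g uh) :
    ((‖S.grad uh‖ ^ 2 - M.k ^ 2 * ‖S.ι uh‖ ^ 2 : ℝ) : ℂ)
        + ((M.jumpEnergy uh + M.k * ‖S.tr uh‖ ^ 2 : ℝ) : ℂ) * Complex.I
      = pip f (S.ι uh) + pip g (S.tr uh) := by
  rw [← huh.2 uh huh.1, ah, Jf_self, pip_self, pip_self, pip_self]
  push_cast
  ring

theorem norm_grad_sq_sub_le (huh : M.IsFEMSolution f g uh) :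
    ‖S.grad uh‖ ^ 2 - M.k ^ 2 * ‖S.ι uh‖ ^ 2 ≤ ‖f‖ * ‖S.ι uh‖ + ‖g‖ * ‖S.tr uh‖ :=
  calc ‖S.grad uh‖ ^ 2 - M.k ^ 2 * ‖S.ι uh‖ ^ 2
      = (pip f (S.ι uh) + pip g (S.tr uh)).re := by
        rw [← huh.energy_identity, ← Complex.mk_eq_add_mul_I]
    _ ≤ ‖pip f (S.ι uh) + pip g (S.tr uh)‖ := Complex.re_le_norm _
    _ ≤ ‖f‖ * ‖S.ι uh‖ + ‖g‖ * ‖S.tr uh‖ := norm_pip_add_pip_le _ _ _ _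

theorem jumpEnergy_add_norm_tr_sq_le (huh : M.IsFEMSolution f g uh) :
    M.jumpEnergy uh + M.k * ‖S.tr uh‖ ^ 2 ≤ ‖f‖ * ‖S.ι uh‖ + ‖g‖ * ‖S.tr uh‖ :=
  calc M.jumpEnergy uh + M.k * ‖S.tr uh‖ ^ 2
      = (pip f (S.ι uh) + pip g (S.tr uh)).im := by
        rw [← huh.energy_identity, ← Complex.mk_eq_add_mul_I]
    _ ≤ ‖pip f (S.ι uh) + pip g (S.tr uh)‖ := Complex.im_le_norm _
    _ ≤ ‖f‖ * ‖S.ι uh‖ + ‖g‖ * ‖S.tr uh‖ := norm_pip_add_pip_le _ _ _ _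

theorem norm_grad_sq_sub_add_jumpEnergy_le (huh : M.IsFEMSolution f g uh) (hk : 0 < M.k) :
    ‖S.grad uh‖ ^ 2 - M.k ^ 2 * ‖S.ι uh‖ ^ 2 + M.jumpEnergy uh
      ≤ 2 * ‖f‖ * ‖S.ι uh‖ + (1 / M.k) * ‖g‖ ^ 2 := by
  have young : 2 * ‖S.tr uh‖ * ‖g‖ ≤ M.k * ‖S.tr uh‖ ^ 2 + M.k⁻¹ * ‖g‖ ^ 2 :=
    two_mul_le_add_mul_sq hk
  rw [one_div]
  linarith [huh.norm_grad_sq_sub_le, huh.jumpEnergy_add_norm_tr_sq_le]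

theorem two_mul_jumpEnergy_add_norm_tr_sq_le (huh : M.IsFEMSolution f g uh) (hk : 0 < M.k) :
    2 * M.jumpEnergy uh + M.k * ‖S.tr uh‖ ^ 2
      ≤ 2 * ‖f‖ * ‖S.ι uh‖ + (1 / M.k) * ‖g‖ ^ 2 := by
  have young : 2 * ‖S.tr uh‖ * ‖g‖ ≤ M.k * ‖S.tr uh‖ ^ 2 + M.k⁻¹ * ‖g‖ ^ 2 :=
    two_mul_le_add_mul_sq hk
  rw [one_div]
  linarith [huh.jumpEnergy_add_norm_tr_sq_le]

end IsFEMSolution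

end MeshData

/-- Lemma 5.4: basic bounds for the CIP-FEM solution.
If `u_h ∈ V_h` solves the CIP-FEM scheme, then
`‖∇u_h‖²_{L²(Ω)} - k²‖u_h‖²_{L²(Ω)} ≤ 2‖f‖_{L²(Ω)}‖u_h‖_{L²(Ω)} + (1/k)‖g‖²_{L²(Γ)}`
and
`∑_e γ_e (h_e/p²)‖[∂u_h/∂n_e]‖²_{L²(e)} + k‖u_h‖²_{L²(Γ)}
  ≤ 2‖f‖_{L²(Ω)}‖u_h‖_{L²(Ω)} + (1/k)‖g‖²_{L²(Γ)}`. -/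
theorem cip_fem_basic_bounds (S : SpaceSkeleton) (M : MeshData S)
    (hk : 0 < M.k) (hγe : ∀ e : M.E, 0 ≤ M.γe e) (hhe : ∀ e : M.E, 0 ≤ M.he e)
    (f : S.H0) (g : S.HB) (uh : S.V) (huh : M.IsFEMSolution f g uh) :
    ‖S.grad uh‖ ^ 2 - M.k ^ 2 * ‖S.ι uh‖ ^ 2
        ≤ 2 * ‖f‖ * ‖S.ι uh‖ + (1 / M.k) * ‖g‖ ^ 2 ∧
    (∑ e : M.E, M.γe e * (M.he e / (M.p : ℝ) ^ 2) * ‖M.jump e uh‖ ^ 2)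
        + M.k * ‖S.tr uh‖ ^ 2
        ≤ 2 * ‖f‖ * ‖S.ι uh‖ + (1 / M.k) * ‖g‖ ^ 2 := by
  have jump_nonneg := M.jumpEnergy_nonneg hγe hhe uh
  have grad_bound := huh.norm_grad_sq_sub_add_jumpEnergy_le hk
  have jump_bound := huh.two_mul_jumpEnergy_add_norm_tr_sq_le hk
  rw [← MeshData.jumpEnergy]
  constructor <;> linarith
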